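/- arXiv:0707.2527 — 3 statements merged into one kernel-verified Lean document; each statement's English description precedes it below -/
import Mathlib

section
/- Let N ≥ 1 and let w, c : {1,...,N} → ℝ satisfy w_n > 0 and c_n > 0 for all n. Let λ > 0 and define κ_n = w_n/(λ c_n) − 1. Assume κ_n ≥ 0 for all n and Σ_{n=1}^N κ_n c_n = 1. Then for every κ' : {1,...,N} → ℝ with κ'_n ≥ 0 for all n and Σ_{n=1}^N κ'_n c_n = 1, one has Σ_{n=1}^N w_n · log(1+κ'_n) ≤ Σ_{n=1}^N w_n · log(1+κ_n). That is, the waterfilling point κ maximizes the weighted sum rate over the feasible set. -/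
/-- The waterfilling point `κ n = w n / (λ c n) − 1` maximizes the weighted
sum rate `Σ w n log(1 + κ n)` over all nonnegative `κ'` satisfying the average power
constraint `Σ κ' n * c n = 1`. -/
theorem waterfilling_maximizes_weighted_sum_rate
    (N : ℕ) (hN : 1 ≤ N) (w c : Fin N → ℝ)
    (hw : ∀ n, 0 < w n) (hc : ∀ n, 0 < c n)
    (lam : ℝ) (hlam : 0 < lam)
    (κ : Fin N → ℝ) (hκdef : ∀ n, κ n = w n / (lam * c n) - 1)
    (hκnn : ∀ n, 0 ≤ κ n) (hκsum : ∑ n, κ n * c n = 1)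
    (κ' : Fin N → ℝ) (hκ'nn : ∀ n, 0 ≤ κ' n) (hκ'sum : ∑ n, κ' n * c n = 1) :
    ∑ n, w n * Real.log (1 + κ' n) ≤ ∑ n, w n * Real.log (1 + κ n) := by
  have key : ∀ n, w n * Real.log (1 + κ' n) ≤
      w n * Real.log (1 + κ n) + lam * (κ' n * c n - κ n * c n) := by
    intro n
    have h1 : 0 < 1 + κ n := by linarith [hκnn n]
    have h2 : 0 < 1 + κ' n := by linarith [hκ'nn n]
    have hlc : 0 < lam * c n := mul_pos hlam (hc n)
    have hwn : w n = lam * c n * (1 + κ n) := by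
      rw [hκdef n, add_sub_cancel, mul_div_cancel₀ _ hlc.ne']
    have hlog := Real.log_le_sub_one_of_pos (div_pos h2 h1)
    rw [Real.log_div h2.ne' h1.ne'] at hlog
    have hm := mul_le_mul_of_nonneg_left hlog (hw n).le
    have he : w n * ((1 + κ' n) / (1 + κ n) - 1) = lam * (κ' n * c n - κ n * c n) := by
      rw [hwn]
      field_simp
      ring
    rw [he] at hm
    linarith
  calc ∑ n, w n * Real.log (1 + κ' n)
      ≤ ∑ n, (w n * Real.log (1 + κ n) + lam * (κ' n * c n - κ n * c n)) :=
        Finset.sum_le_sum fun n _ => key n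
    _ = ∑ n, w n * Real.log (1 + κ n) := by
        rw [Finset.sum_add_distrib, ← Finset.mul_sum, Finset.sum_sub_distrib, hκsum, hκ'sum]
        ring
end

section
/- Let N ≥ 1 and let w, c : {1,...,N} → ℝ satisfy w_n > 0 and c_n > 0 for all n. Let λ > 0, define κ_n = w_n/(λ c_n) − 1, and assume κ_n ≥ 0 for all n and Σ_{n=1}^N κ_n c_n = 1. If κ' : {1,...,N} → ℝ satisfies κ'_n ≥ 0 for all n, Σ_{n=1}^N κ'_n c_n = 1, and Σ_{n=1}^N w_n · log(1+κ'_n) = Σ_{n=1}^N w_n · log(1+κ_n), then κ'_n = κ_n for all n; i.e., the waterfilling maximizer is the unique maximizer. -/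
/-- The waterfilling point `κ n = w n / (λ c n) − 1` is the *unique* maximizer
of the weighted sum rate `Σ w n log(1 + κ n)` over all nonnegative `κ'` satisfying the
average power constraint `Σ κ' n * c n = 1`. -/
theorem waterfilling_unique_maximizer
    (N : ℕ) (hN : 1 ≤ N) (w c : Fin N → ℝ)
    (hw : ∀ n, 0 < w n) (hc : ∀ n, 0 < c n)
    (lam : ℝ) (hlam : 0 < lam)
    (κ : Fin N → ℝ) (hκdef : ∀ n, κ n = w n / (lam * c n) - 1)
    (hκnn : ∀ n, 0 ≤ κ n) (hκsum : ∑ n, κ n * c n = 1)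
    (κ' : Fin N → ℝ) (hκ'nn : ∀ n, 0 ≤ κ' n) (hκ'sum : ∑ n, κ' n * c n = 1)
    (heq : ∑ n, w n * Real.log (1 + κ' n) = ∑ n, w n * Real.log (1 + κ n)) :
    ∀ n, κ' n = κ n := by
  have hwe : ∀ n, w n = lam * c n * (1 + κ n) := by
    intro n
    have h1 := (hc n).ne'
    rw [hκdef n]
    field_simp
    ring
  have hstrict : ∀ n, κ' n ≠ κ n →
      w n * Real.log (1 + κ' n) < w n * Real.log (1 + κ n) + lam * (κ' n * c n - κ n * c n) := by
    intro n hne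
    have hp : 0 < 1 + κ n := by linarith [hκnn n]
    have hp' : 0 < 1 + κ' n := by linarith [hκ'nn n]
    have hr : (1 + κ' n) / (1 + κ n) ≠ 1 := by
      intro h
      rw [div_eq_one_iff_eq hp.ne'] at h
      exact hne (by linarith)
    have hl := Real.log_lt_sub_one_of_pos (div_pos hp' hp) hr
    rw [Real.log_div hp'.ne' hp.ne'] at hl
    have hm := mul_lt_mul_of_pos_left hl (hw n)
    have he : w n * ((1 + κ' n) / (1 + κ n) - 1) = lam * (κ' n * c n - κ n * c n) := by
      rw [hwe n]
      field_simp
      ring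
    rw [he, mul_sub] at hm
    linarith
  by_contra! hcon
  obtain ⟨m, hm⟩ := hcon
  have hlt : ∑ n, w n * Real.log (1 + κ' n) <
      ∑ n, (w n * Real.log (1 + κ n) + lam * (κ' n * c n - κ n * c n)) := by
    apply Finset.sum_lt_sum
    · intro n _
      by_cases h : κ' n = κ n
      · simp [h]
      · exact (hstrict n h).le
    · exact ⟨m, Finset.mem_univ m, hstrict m hm⟩
  rw [Finset.sum_add_distrib, ← Finset.mul_sum, Finset.sum_sub_distrib, hκsum, hκ'sum, heq] at hlt
  simp at hlt
end

section
/- Let γ̄ > 0 and let f(γ) = (1/γ̄)·exp(−γ/γ̄) be the exponential density. Then there exists a unique x > 0 such that ∫_x^∞ (1/x − 1/γ)·f(γ) dγ = 1; i.e., the cutoff value γ_cut of the optimal continuous-rate continuous-power (waterfilling) adaptation for the Rayleigh fading channel exists and is unique. -/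
open MeasureTheory Set in
lemma aux_exp_int (k c : ℝ) (hk : 0 < k) :
    IntegrableOn (fun u : ℝ => Real.exp (-k * u)) (Ioi c) ∧
      ∫ u in Ioi c, Real.exp (-k * u) = Real.exp (-k * c) / k := by
  refine ⟨integrableOn_exp_mul_Ioi (by linarith) c, ?_⟩
  rw [integral_exp_mul_Ioi (by linarith)]
  rw [neg_div_neg_eq]

open MeasureTheory Set in
lemma aux_bound (k u : ℝ) (hu : u ∈ Ioi (1:ℝ)) :
    0 ≤ (1 - 1 / u) * Real.exp (-k * u) ∧
      (1 - 1 / u) * Real.exp (-k * u) ≤ Real.exp (-k * u) := by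
  have hu1 : (1:ℝ) < u := hu
  have h1 : 1 / u ≤ 1 := by rw [div_le_one (by linarith)]; exact hu1.le
  have h2 : 0 < 1 / u := by positivity
  have h3 := Real.exp_pos (-k * u)
  constructor
  · exact mul_nonneg (by linarith) h3.le
  · nlinarith

open MeasureTheory Set in
lemma aux_int (k : ℝ) (hk : 0 < k) :
    IntegrableOn (fun u : ℝ => (1 - 1 / u) * Real.exp (-k * u)) (Ioi 1) := by
  refine Integrable.mono' (aux_exp_int k 1 hk).1 ?_ ?_
  · exact (by fun_prop : Measurable (fun u : ℝ => (1 - 1 / u) * Real.exp (-k * u))).aestronglyMeasurable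
  · refine (ae_restrict_iff' measurableSet_Ioi).2 (ae_of_all _ fun u hu => ?_)
    have := aux_bound k u hu
    rw [Real.norm_of_nonneg this.1]
    exact this.2

open MeasureTheory Set in
lemma aux_subst (γ x : ℝ) (hx : 0 < x) :
    ∫ g in Ioi x, (1 / x - 1 / g) * ((1 / γ) * Real.exp (-g / γ))
      = (1 / γ) * ∫ u in Ioi (1:ℝ), (1 - 1 / u) * Real.exp (-(x / γ) * u) := by
  have h := integral_comp_mul_left_Ioi
    (fun g : ℝ => (1 / x - 1 / g) * ((1 / γ) * Real.exp (-g / γ))) 1 hx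
  rw [mul_one, smul_eq_mul] at h
  rw [← integral_const_mul]
  have h2 : ∫ g in Ioi x, (1 / x - 1 / g) * ((1 / γ) * Real.exp (-g / γ))
      = x * ∫ u in Ioi (1:ℝ), (1 / x - 1 / (x * u)) * ((1 / γ) * Real.exp (-(x * u) / γ)) := by
    rw [h]; field_simp
  rw [h2, ← integral_const_mul]
  refine setIntegral_congr_fun measurableSet_Ioi fun u hu => ?_
  have hu1 : (1:ℝ) < u := hu
  have hu0 : u ≠ 0 := by linarith
  have e : -(x * u) / γ = -(x / γ) * u := by ring
  simp only [e]
  have : x * (1 / x - 1 / (x * u)) = 1 - 1 / u := by field_simp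
  rw [← this]; ring

open MeasureTheory Set in
lemma aux_anti (k l : ℝ) (hk : 0 < k) (hl : k < l) :
    ∫ u in Ioi (1:ℝ), (1 - 1 / u) * Real.exp (-l * u)
      ≤ Real.exp (-(l - k)) * ∫ u in Ioi (1:ℝ), (1 - 1 / u) * Real.exp (-k * u) := by
  rw [← integral_const_mul]
  refine setIntegral_mono_on (aux_int l (hk.trans hl)) ((aux_int k hk).const_mul _)
    measurableSet_Ioi fun u hu => ?_
  have hu1 : (1:ℝ) < u := hu
  have h0 : 0 ≤ 1 - 1 / u := by
    rw [sub_nonneg, div_le_one (by linarith)]; exact hu1.le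
  have : Real.exp (-l * u) ≤ Real.exp (-(l - k)) * Real.exp (-k * u) := by
    rw [← Real.exp_add]
    apply Real.exp_le_exp.2
    nlinarith
  calc _ ≤ (1 - 1 / u) * (Real.exp (-(l - k)) * Real.exp (-k * u)) :=
        mul_le_mul_of_nonneg_left this h0
    _ = _ := by ring

open MeasureTheory Set in
lemma aux_upper (k : ℝ) (hk : 0 < k) :
    ∫ u in Ioi (1:ℝ), (1 - 1 / u) * Real.exp (-k * u) ≤ 1 / k := by
  have h := aux_exp_int k 1 hk
  calc _ ≤ ∫ u in Ioi (1:ℝ), Real.exp (-k * u) :=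
        setIntegral_mono_on (aux_int k hk) h.1 measurableSet_Ioi fun u hu => (aux_bound k u hu).2
    _ = Real.exp (-k * 1) / k := h.2
    _ ≤ 1 / k := by
        gcongr
        exact Real.exp_le_one_iff.2 (by linarith)

open MeasureTheory Set in
lemma aux_lower (k : ℝ) (hk : 0 < k) :
    (1 - 2 * k) / (2 * k) ≤ ∫ u in Ioi (1:ℝ), (1 - 1 / u) * Real.exp (-k * u) := by
  have h := aux_exp_int k 2 hk
  have hsub : Ioi (2:ℝ) ⊆ Ioi 1 := Ioi_subset_Ioi (by norm_num)
  calc (1 - 2 * k) / (2 * k) ≤ Real.exp (-k * 2) / (2 * k) := by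
        gcongr
        linarith [Real.add_one_le_exp (-k * 2)]
    _ = (1 / 2) * ∫ u in Ioi (2:ℝ), Real.exp (-k * u) := by rw [h.2]; field_simp
    _ = ∫ u in Ioi (2:ℝ), (1 / 2) * Real.exp (-k * u) := by rw [integral_const_mul]
    _ ≤ ∫ u in Ioi (2:ℝ), (1 - 1 / u) * Real.exp (-k * u) := by
        refine setIntegral_mono_on (h.1.const_mul _) ((aux_int k hk).mono_set hsub)
          measurableSet_Ioi fun u hu => ?_
        have hu1 : (2:ℝ) < u := hu
        have : 1 / u ≤ 1 / 2 := by gcongr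
        gcongr
        linarith
    _ ≤ _ := by
        refine setIntegral_mono_set (aux_int k hk) ?_ hsub.eventuallyLE
        exact (ae_restrict_iff' measurableSet_Ioi).2
          (ae_of_all _ fun u hu => (aux_bound k u hu).1)

open MeasureTheory Set in
lemma aux_cont (a b : ℝ) (ha : 0 < a) :
    ContinuousOn (fun k : ℝ => ∫ u in Ioi (1:ℝ), (1 - 1 / u) * Real.exp (-k * u)) (Icc a b) := by
  refine continuousOn_of_dominated (bound := fun u => Real.exp (-a * u)) ?_ ?_
    (aux_exp_int a 1 ha).1 ?_
  · intro k _
    exact (by fun_prop : Measurable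
      (fun u : ℝ => (1 - 1 / u) * Real.exp (-k * u))).aestronglyMeasurable
  · intro k hk
    refine (ae_restrict_iff' measurableSet_Ioi).2 (ae_of_all _ fun u hu => ?_)
    have := aux_bound k u hu
    rw [Real.norm_of_nonneg this.1]
    refine this.2.trans (Real.exp_le_exp.2 ?_)
    have hu1 : (1:ℝ) < u := hu
    nlinarith [hk.1]
  · exact ae_of_all _ fun u => by fun_prop

/-- For the Rayleigh fading channel with exponential SNR density
`f(γ) = (1/γ̄)e^{−γ/γ̄}`, the waterfilling cutoff exists and is unique: there is a unique
`x > 0` with `∫_x^∞ (1/x − 1/γ) f(γ) dγ = 1`. -/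
theorem rayleigh_waterfilling_cutoff_exists_unique
    (γbar : ℝ) (hγbar : 0 < γbar) :
    ∃! x : ℝ, 0 < x ∧
      ∫ g in Set.Ioi x, (1 / x - 1 / g) * ((1 / γbar) * Real.exp (-g / γbar)) = 1 := by
  have key : ∀ x : ℝ, 0 < x →
      ((∫ g in Set.Ioi x, (1 / x - 1 / g) * ((1 / γbar) * Real.exp (-g / γbar)) = 1) ↔
        ∫ u in Set.Ioi (1:ℝ), (1 - 1 / u) * Real.exp (-(x / γbar) * u) = γbar) := by
    intro x hx
    rw [aux_subst γbar x hx, one_div, inv_mul_eq_one₀ hγbar.ne']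
    exact eq_comm
  have uniq : ∀ k l : ℝ, 0 < k → k < l →
      ∫ u in Set.Ioi (1:ℝ), (1 - 1 / u) * Real.exp (-k * u) = γbar →
      ∫ u in Set.Ioi (1:ℝ), (1 - 1 / u) * Real.exp (-l * u) = γbar → False := by
    intro k l hk hl h1 h2
    have h := aux_anti k l hk hl
    rw [h1, h2] at h
    have : Real.exp (-(l - k)) < 1 := Real.exp_lt_one_iff.2 (by linarith)
    nlinarith
  have ex : ∃ k : ℝ, 0 < k ∧
      ∫ u in Set.Ioi (1:ℝ), (1 - 1 / u) * Real.exp (-k * u) = γbar := by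
    have ha : 0 < 1 / (2 * (1 + γbar)) := by positivity
    have hab : 1 / (2 * (1 + γbar)) ≤ 1 / γbar := by
      apply one_div_le_one_div_of_le hγbar; linarith
    have hl := aux_lower _ ha
    have hu := aux_upper (1 / γbar) (by positivity)
    have e1 : (1 - 2 * (1 / (2 * (1 + γbar)))) / (2 * (1 / (2 * (1 + γbar)))) = γbar := by
      field_simp
      ring
    rw [e1] at hl
    rw [one_div_one_div] at hu
    obtain ⟨k, hk, hk2⟩ := intermediate_value_Icc' hab (aux_cont _ (1 / γbar) ha) ⟨hu, hl⟩
    exact ⟨k, ha.trans_le hk.1, hk2⟩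
  obtain ⟨k, hk, hke⟩ := ex
  have hx : 0 < k * γbar := by positivity
  refine ⟨k * γbar, ⟨hx, (key _ hx).2 ?_⟩, ?_⟩
  · rw [mul_div_cancel_right₀ _ hγbar.ne']; exact hke
  · rintro y ⟨hy, hye⟩
    have h := (key y hy).1 hye
    have hy' : 0 < y / γbar := by positivity
    rcases lt_trichotomy (y / γbar) k with h1 | h1 | h1
    · exact (uniq _ _ hy' h1 h hke).elim
    · rw [← h1]; field_simp
    · exact (uniq _ _ hk h1 hke h).elim
end
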